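/- Consider the downlink MU-MIMO setting: positive integers N, K, M_1,…,M_K with N ≥ Σ_k M_k; matrices H_k ∈ ℂ^{M_k×N} (k = 1,…,K) such that the stacked matrix H = [H_1; …; H_K] has full row rank; reals L_k > 0, σ² > 0, P_T > 0; nonnegative weights η_k, η_{c,k} (k = 1,…,K); M = min_k M_k; N_k = N − Σ_{k'<k} M_{k'}. SNS bases: Ψ_1 = I_N and, for k ≥ 2, Ψ_k ∈ ℂ^{N×N_k} has orthonormal columns and satisfies H_j Ψ_k = 0 for all j < k. BD bases: for each k, Ψ_k^{BD} ∈ ℂ^{N×M_k} has orthonormal columns and satisfies H_j Ψ_k^{BD} = 0 for all j ≠ k. Define: (i) the SNS optimal weighted sum rate R⋆ as the supremum, over all tuples (Q_c, X_1,…,X_K) of Hermitian positive semi-definite matrices with Q_c ∈ ℂ^{N×N}, rank(Q_c) ≤ M, X_k ∈ ℂ^{N_k×N_k}, rank(X_k) ≤ M_k, and tr(Q_c) + Σ_k tr(X_k) ≤ P_T, of the quantity Σ_k η_k η_{c,k} R_c + Σ_k η_k R_k, where R_k = log₂det( I + (1/L_k) H_k Ψ_k X_k Ψ_k^H H_k^H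 [σ² I + (1/L_k) H_k (Σ_{k'<k} Ψ_{k'} X_{k'} Ψ_{k'}^H) H_k^H]^{-1} ), R_{k,c} = log₂det( I + (1/L_k) H_k Q_c H_k^H [σ² I + (1/L_k) H_k (Σ_{k'≤k} Ψ_{k'} X_{k'} Ψ_{k'}^H) H_k^H]^{-1} ), and R_c = min_k R_{k,c}; (ii) the BD-based MIMO-RSMA optimal weighted sum rate R^{BD+MIMO-CM⋆} as the supremum, over tuples (Q_c, S_1,…,S_K) of Hermitian positive semi-definite matrices with Q_c ∈ ℂ^{N×N}, rank(Q_c) ≤ M, S_k ∈ ℂ^{M_k×M_k}, and tr(Q_c) + Σ_k tr(S_k) ≤ P_T, of Σ_k η_k η_{c,k} (min_k R_{k,c}^{BD}) + Σ_k η_k R_k^{BD}, where Q_k = Ψ_k^{BD} S_k (Ψ_k^{BD})^H, R_k^{BD} = log₂det( I + (1/(L_kσ²)) H_k Q_k H_k^H ), and R_{k,c}^{BD} = log₂det( I + (1/L_k) H_k Q_c H_k^H [σ² I + (1/L_k) H_k Q_k H_k^H]^{-1} ); (iii) the BD optimal weighted sum rate R^{BD⋆} as the supremum of Σ_k η_k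 R_k^{BD} over (S_1,…,S_K) Hermitian positive semi-definite with Σ_k tr(S_k) ≤ P_T. Then R⋆ ≥ R^{BD+MIMO-CM⋆} ≥ R^{BD⋆}. -/

import Mathlib

open Matrix
open scoped ComplexOrder

/-- The SNS null-space dimension `N_k = N − Σ_{k'<k} M_{k'}`. -/
def snsDim (N : ℕ) (M : ℕ → ℕ) (k : ℕ) : ℕ := N - ∑ j ∈ Finset.Icc 1 (k - 1), M j

/-- The stacked multi-user channel matrix `H = [H_1; …; H_K]`. -/
def stackMat (N : ℕ) (M : ℕ → ℕ) (H : (j : ℕ) → Matrix (Fin (M j)) (Fin N) ℂ) (i : ℕ) :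
    Matrix ((j : Fin (i - 1)) × Fin (M (j.val + 1))) (Fin N) ℂ :=
  Matrix.of fun p c => H (p.1.val + 1) p.2 c

/-- The SNS private rate `R_k` of user `k`. -/
noncomputable def snsPrivateRate (N : ℕ) (M : ℕ → ℕ)
    (H : (k : ℕ) → Matrix (Fin (M k)) (Fin N) ℂ)
    (Ψ : (k : ℕ) → Matrix (Fin N) (Fin (snsDim N M k)) ℂ)
    (L : ℕ → ℝ) (s : ℝ)
    (X : (k : ℕ) → Matrix (Fin (snsDim N M k)) (Fin (snsDim N M k)) ℂ)
    (k : ℕ) : ℝ :=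
  Real.logb 2
    ((1 + ((1 / L k) • (H k * (Ψ k * X k * (Ψ k)ᴴ) * (H k)ᴴ)) *
        (s • (1 : Matrix (Fin (M k)) (Fin (M k)) ℂ) +
          (1 / L k) •
            (H k * (∑ j ∈ Finset.Icc 1 (k - 1), Ψ j * X j * (Ψ j)ᴴ) * (H k)ᴴ))⁻¹).det.re)

/-- The SNS common-message rate `R_{k,c}` of user `k`. -/
noncomputable def snsCommonRate (N : ℕ) (M : ℕ → ℕ)
    (H : (k : ℕ) → Matrix (Fin (M k)) (Fin N) ℂ)
    (Ψ : (k : ℕ) → Matrix (Fin N) (Fin (snsDim N M k)) ℂ)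
    (L : ℕ → ℝ) (s : ℝ) (Qc : Matrix (Fin N) (Fin N) ℂ)
    (X : (k : ℕ) → Matrix (Fin (snsDim N M k)) (Fin (snsDim N M k)) ℂ)
    (k : ℕ) : ℝ :=
  Real.logb 2
    ((1 + ((1 / L k) • (H k * Qc * (H k)ᴴ)) *
        (s • (1 : Matrix (Fin (M k)) (Fin (M k)) ℂ) +
          (1 / L k) •
            (H k * (∑ j ∈ Finset.Icc 1 k, Ψ j * X j * (Ψ j)ᴴ) * (H k)ᴴ))⁻¹).det.re)

/-- The SNS weighted sum rate `Σ_k η_k η_{c,k} R_c + Σ_k η_k R_k` with `R_c = min_k R_{k,c}`. -/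
noncomputable def snsWSR (K N : ℕ) (hK : 1 ≤ K) (M : ℕ → ℕ)
    (H : (k : ℕ) → Matrix (Fin (M k)) (Fin N) ℂ)
    (Ψ : (k : ℕ) → Matrix (Fin N) (Fin (snsDim N M k)) ℂ)
    (L : ℕ → ℝ) (s : ℝ) (η ηc : ℕ → ℝ) (Qc : Matrix (Fin N) (Fin N) ℂ)
    (X : (k : ℕ) → Matrix (Fin (snsDim N M k)) (Fin (snsDim N M k)) ℂ) : ℝ :=
  (∑ k ∈ Finset.Icc 1 K, η k * ηc k *
      ((Finset.Icc 1 K).inf' (Finset.nonempty_Icc.mpr hK)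
        (snsCommonRate N M H Ψ L s Qc X))) +
  ∑ k ∈ Finset.Icc 1 K, η k * snsPrivateRate N M H Ψ L s X k

/-- The SNS optimal weighted sum rate `R⋆` (problem (17) of the paper). -/
noncomputable def snsOptWSR (K N : ℕ) (hK : 1 ≤ K) (M : ℕ → ℕ)
    (H : (k : ℕ) → Matrix (Fin (M k)) (Fin N) ℂ)
    (Ψ : (k : ℕ) → Matrix (Fin N) (Fin (snsDim N M k)) ℂ)
    (L : ℕ → ℝ) (s : ℝ) (η ηc : ℕ → ℝ) (PT : ℝ) : ℝ :=
  sSup {r : ℝ | ∃ (Qc : Matrix (Fin N) (Fin N) ℂ)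
      (X : (k : ℕ) → Matrix (Fin (snsDim N M k)) (Fin (snsDim N M k)) ℂ),
    Qc.PosSemidef ∧
    Qc.rank ≤ (Finset.Icc 1 K).inf' (Finset.nonempty_Icc.mpr hK) M ∧
    (∀ k ∈ Finset.Icc 1 K, (X k).PosSemidef ∧ (X k).rank ≤ M k) ∧
    Qc.trace.re + ∑ k ∈ Finset.Icc 1 K, (X k).trace.re ≤ PT ∧
    r = snsWSR K N hK M H Ψ L s η ηc Qc X}

/-- The BD private rate `R_k^{BD} = log₂ det(I + (1/(L_k σ²)) H_k Q_k H_kᴴ)`,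
with `Q_k = Ψ_k^{BD} S_k (Ψ_k^{BD})ᴴ`. -/
noncomputable def bdPrivateRate (N : ℕ) (M : ℕ → ℕ)
    (H : (k : ℕ) → Matrix (Fin (M k)) (Fin N) ℂ)
    (Ψbd : (k : ℕ) → Matrix (Fin N) (Fin (M k)) ℂ)
    (L : ℕ → ℝ) (s : ℝ)
    (S : (k : ℕ) → Matrix (Fin (M k)) (Fin (M k)) ℂ) (k : ℕ) : ℝ :=
  Real.logb 2
    ((1 + (1 / (L k * s)) •
        (H k * (Ψbd k * S k * (Ψbd k)ᴴ) * (H k)ᴴ)).det.re)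

/-- The BD-based MIMO-RSMA common-message rate `R_{k,c}^{BD}`. -/
noncomputable def bdCommonRate (N : ℕ) (M : ℕ → ℕ)
    (H : (k : ℕ) → Matrix (Fin (M k)) (Fin N) ℂ)
    (Ψbd : (k : ℕ) → Matrix (Fin N) (Fin (M k)) ℂ)
    (L : ℕ → ℝ) (s : ℝ) (Qc : Matrix (Fin N) (Fin N) ℂ)
    (S : (k : ℕ) → Matrix (Fin (M k)) (Fin (M k)) ℂ) (k : ℕ) : ℝ :=
  Real.logb 2
    ((1 + ((1 / L k) • (H k * Qc * (H k)ᴴ)) *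
        (s • (1 : Matrix (Fin (M k)) (Fin (M k)) ℂ) +
          (1 / L k) • (H k * (Ψbd k * S k * (Ψbd k)ᴴ) * (H k)ᴴ))⁻¹).det.re)

/-- The BD-based MIMO-RSMA optimal weighted sum rate `R^{BD+MIMO-CM⋆}`. -/
noncomputable def bdRsmaOptWSR (K N : ℕ) (hK : 1 ≤ K) (M : ℕ → ℕ)
    (H : (k : ℕ) → Matrix (Fin (M k)) (Fin N) ℂ)
    (Ψbd : (k : ℕ) → Matrix (Fin N) (Fin (M k)) ℂ)
    (L : ℕ → ℝ) (s : ℝ) (η ηc : ℕ → ℝ) (PT : ℝ) : ℝ :=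
  sSup {r : ℝ | ∃ (Qc : Matrix (Fin N) (Fin N) ℂ)
      (S : (k : ℕ) → Matrix (Fin (M k)) (Fin (M k)) ℂ),
    Qc.PosSemidef ∧
    Qc.rank ≤ (Finset.Icc 1 K).inf' (Finset.nonempty_Icc.mpr hK) M ∧
    (∀ k ∈ Finset.Icc 1 K, (S k).PosSemidef) ∧
    Qc.trace.re + ∑ k ∈ Finset.Icc 1 K, (S k).trace.re ≤ PT ∧
    r = (∑ k ∈ Finset.Icc 1 K, η k * ηc k *
          ((Finset.Icc 1 K).inf' (Finset.nonempty_Icc.mpr hK)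
            (bdCommonRate N M H Ψbd L s Qc S))) +
        ∑ k ∈ Finset.Icc 1 K, η k * bdPrivateRate N M H Ψbd L s S k}

/-- The BD optimal weighted sum rate `R^{BD⋆}` (no common message). -/
noncomputable def bdOptWSR (K N : ℕ) (M : ℕ → ℕ)
    (H : (k : ℕ) → Matrix (Fin (M k)) (Fin N) ℂ)
    (Ψbd : (k : ℕ) → Matrix (Fin N) (Fin (M k)) ℂ)
    (L : ℕ → ℝ) (s : ℝ) (η : ℕ → ℝ) (PT : ℝ) : ℝ :=
  sSup {r : ℝ | ∃ S : (k : ℕ) → Matrix (Fin (M k)) (Fin (M k)) ℂ,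
    (∀ k ∈ Finset.Icc 1 K, (S k).PosSemidef) ∧
    (∑ k ∈ Finset.Icc 1 K, (S k).trace.re) ≤ PT ∧
    r = ∑ k ∈ Finset.Icc 1 K, η k * bdPrivateRate N M H Ψbd L s S k}

/-!
Write `Q_k` for the covariance transmitted to user `k`. Full row rank makes `ker [H_1; …; H_{k-1}]`
of dimension exactly `N_k`, so the columns of `Ψ_k` span it, and they span in particular the columns
of `Ψ_k^{BD}`. Hence every BD covariance `Q_k = Ψ_k^{BD} S_k (Ψ_k^{BD})ᴴ` equals `Ψ_k X_k Ψ_kᴴ` with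
`X_k` of the same trace and of rank at most `M_k`; since `H_k Q_j = 0` for `j ≠ k`, the SNS rates of
`X` are the BD rates of `S`. So the BD-RSMA rates form a subset of the SNS rates, and the choice
`Q_c = 0` makes the BD rates a subset of the BD-RSMA rates.

Comparing the suprema also needs the SNS rates to be bounded. A rate is a difference of two values
of `log₂ det (σ² I + P)`, and for `P` positive semidefinite of bounded trace the eigenvalues of `P`
are bounded, so these values lie in a fixed interval.
-/

theorem posDef_smul_one_add {𝕜 n : Type*} [RCLike 𝕜] [DecidableEq n] {P : Matrix n n 𝕜} {s : ℝ}
    (hP : P.PosSemidef) (hs : 0 < s) : (s • (1 : Matrix n n 𝕜) + P).PosDef :=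
  (PosDef.one.smul hs).add_posSemidef hP

section PosSemidef

variable {𝕜 n : Type*} [RCLike 𝕜] [Fintype n] [DecidableEq n]
  {P : Matrix n n 𝕜} {s : ℝ}

theorem smul_one_add_smul_eq_conjStarAlgAut_diagonal (hP : P.IsHermitian) (a b : 𝕜) :
    a • (1 : Matrix n n 𝕜) + b • P = Unitary.conjStarAlgAut 𝕜 _ hP.eigenvectorUnitary
      (diagonal fun i ↦ a + b * hP.eigenvalues i) := by
  have hdiag : (diagonal fun i ↦ a + b * hP.eigenvalues i : Matrix n n 𝕜) =
      a • 1 + b • diagonal (RCLike.ofReal ∘ hP.eigenvalues) := by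
    rw [smul_one_eq_diagonal, ← diagonal_smul, diagonal_add]
    rfl
  rw [hdiag, map_add, map_smul, map_smul, map_one, ← hP.spectral_theorem]

theorem det_smul_one_add_eq_prod_eigenvalues (hP : P.IsHermitian) (s : ℝ) :
    (s • (1 : Matrix n n 𝕜) + P).det = ∏ i, ((s : 𝕜) + hP.eigenvalues i) := by
  have hshift := smul_one_add_smul_eq_conjStarAlgAut_diagonal hP (s : 𝕜) 1
  simp only [one_smul, one_mul] at hshift
  rw [RCLike.real_smul_eq_coe_smul (K := 𝕜), hshift, Unitary.conjStarAlgAut_apply,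
    det_mul_right_comm, Unitary.mul_star_self_of_mem hP.eigenvectorUnitary.2, Matrix.one_mul,
    det_diagonal]

theorem eigenvalues_le_trace (hP : P.PosSemidef) (i : n) :
    (hP.isHermitian.eigenvalues i : 𝕜) ≤ P.trace := by
  rw [hP.isHermitian.trace_eq_sum_eigenvalues]
  exact Finset.single_le_sum (f := fun j ↦ (hP.isHermitian.eigenvalues j : 𝕜))
    (fun j _ ↦ RCLike.ofReal_nonneg.mpr (hP.eigenvalues_nonneg j)) (Finset.mem_univ i)

theorem pow_card_le_det_smul_one_add (hP : P.PosSemidef) (hs : 0 ≤ s) :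
    (s : 𝕜) ^ Fintype.card n ≤ (s • (1 : Matrix n n 𝕜) + P).det := by
  rw [det_smul_one_add_eq_prod_eigenvalues hP.isHermitian, ← Finset.card_univ, ← Finset.prod_const]
  exact Finset.prod_le_prod (fun _ _ ↦ RCLike.ofReal_nonneg.mpr hs) fun i _ ↦
    le_add_of_nonneg_right (RCLike.ofReal_nonneg.mpr (hP.eigenvalues_nonneg i))

theorem det_smul_one_add_le_pow_card (hP : P.PosSemidef) (hs : 0 ≤ s) :
    (s • (1 : Matrix n n 𝕜) + P).det ≤ ((s : 𝕜) + P.trace) ^ Fintype.card n := by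
  rw [det_smul_one_add_eq_prod_eigenvalues hP.isHermitian, ← Finset.card_univ, ← Finset.prod_const]
  refine Finset.prod_le_prod (fun i _ ↦ ?_) fun i _ ↦ add_le_add_right (eigenvalues_le_trace hP i) _
  exact add_nonneg (RCLike.ofReal_nonneg.mpr hs)
    (RCLike.ofReal_nonneg.mpr (hP.eigenvalues_nonneg i))

theorem posSemidef_trace_smul_one_sub (hP : P.PosSemidef) :
    (P.trace • (1 : Matrix n n 𝕜) - P).PosSemidef := by
  rw [sub_eq_add_neg, ← neg_one_smul 𝕜 P,
    smul_one_add_smul_eq_conjStarAlgAut_diagonal hP.isHermitian, Unitary.conjStarAlgAut_apply]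
  refine (PosSemidef.diagonal fun i ↦ ?_).mul_mul_conjTranspose_same _
  rw [neg_one_mul, ← sub_eq_add_neg]
  exact sub_nonneg.mpr (eigenvalues_le_trace hP i)

end PosSemidef

theorem trace_mul_mul_conjTranspose_le {𝕜 m n : Type*} [RCLike 𝕜] [Fintype m] [Fintype n]
    {P : Matrix n n 𝕜} (hP : P.PosSemidef) (H : Matrix m n 𝕜) :
    (H * P * Hᴴ).trace ≤ P.trace * (H * Hᴴ).trace := by
  classical
  have hnonneg := ((posSemidef_trace_smul_one_sub hP).mul_mul_conjTranspose_same H).trace_nonneg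
  rwa [Matrix.mul_sub, Matrix.sub_mul, trace_sub, Matrix.mul_smul, Matrix.mul_one, Matrix.smul_mul,
    trace_smul, smul_eq_mul, sub_nonneg] at hnonneg

theorem det_one_add_mul_inv {n R : Type*} [Fintype n] [DecidableEq n] [Field R] (A : Matrix n n R)
    {W : Matrix n n R} (hW : IsUnit W.det) : (1 + A * W⁻¹).det = (A + W).det / W.det := by
  rw [← W.mul_nonsing_inv hW, ← Matrix.add_mul, det_mul, det_nonsing_inv, Ring.inverse_eq_inv',
    div_eq_mul_inv, add_comm]

section NullSpace

variable {R l m n p : Type*} [Field R] [Fintype n] [Fintype p]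
  [DecidableEq p] {G : Matrix m n R} {Ψ : Matrix n p R} {Φ : Matrix p n R}

theorem range_mulVecLin_eq_ker_of_mul_eq_zero (hΦΨ : Φ * Ψ = 1) (hGΨ : G * Ψ = 0)
    (hcard : Fintype.card n ≤ G.rank + Fintype.card p) :
    LinearMap.range Ψ.mulVecLin = LinearMap.ker G.mulVecLin := by
  have hinj : Function.Injective Ψ.mulVecLin :=
    Function.LeftInverse.injective (g := Φ.mulVecLin) fun x ↦ by
      simp [mulVec_mulVec, hΦΨ]
  refine Submodule.eq_of_le_of_finrank_le ?_ ?_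
  · rintro _ ⟨x, rfl⟩
    simp [mulVec_mulVec, hGΨ]
  · have hnullity := G.mulVecLin.finrank_range_add_finrank_ker
    rw [LinearMap.finrank_range_of_inj hinj]
    simp only [Module.finrank_fintype_fun_eq_card] at hnullity ⊢
    rw [← Matrix.rank] at hnullity
    omega

theorem mul_mul_eq_self_of_mul_eq_zero (hΦΨ : Φ * Ψ = 1) (hGΨ : G * Ψ = 0)
    (hcard : Fintype.card n ≤ G.rank + Fintype.card p) {B : Matrix n l R} (hGB : G * B = 0) :
    Ψ * (Φ * B) = B := by
  refine ext_col fun c ↦ ?_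
  have hker : B.col c ∈ LinearMap.ker G.mulVecLin := by
    rw [LinearMap.mem_ker]
    ext i
    exact congrFun (congrFun hGB i) c
  rw [← range_mulVecLin_eq_ker_of_mul_eq_zero hΦΨ hGΨ hcard] at hker
  obtain ⟨y, hy⟩ := hker
  calc (Ψ * (Φ * B)).col c = Ψ *ᵥ (Φ *ᵥ B.col c) := rfl
    _ = B.col c := by rw [← hy, mulVecLin_apply, mulVec_mulVec y, hΦΨ, one_mulVec]

end NullSpace

section Covariance

variable {R l m n : Type*} [CommSemiring R] [StarRing R] [Fintype m] [Fintype n]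

theorem trace_mul_mul_conjTranspose_of_orthonormal [DecidableEq n] {Ψ : Matrix m n R}
    (hΨ : Ψᴴ * Ψ = 1) (X : Matrix n n R) : (Ψ * X * Ψᴴ).trace = X.trace := by
  rw [trace_mul_comm, ← Matrix.mul_assoc, hΨ, Matrix.one_mul]

theorem mul_mul_mul_conjTranspose_eq_zero {H : Matrix l m R} {B : Matrix m n R} (hHB : H * B = 0)
    (S : Matrix n n R) : H * (B * S * Bᴴ) * Hᴴ = 0 := by
  rw [← Matrix.mul_assoc, ← Matrix.mul_assoc, hHB]
  simp only [Matrix.zero_mul]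

end Covariance

section Rate

variable {m n : Type*} [Fintype m] [DecidableEq m] [Fintype n]

/-- The differential entropy, in bits and up to an additive constant depending only on the
dimension, of a circularly symmetric Gaussian vector of covariance `P` observed in white noise of
power `s`. -/
noncomputable def noisyEntropy (s : ℝ) (P : Matrix m m ℂ) : ℝ :=
  Real.logb 2 (s • (1 : Matrix m m ℂ) + P).det.re

/-- The rate over the channel `H` with power gain `g` and noise power `s` of a signal of covariance
`A` decoded against interference of covariance `B`; every rate of the SNS and BD schemes is of this
form. -/
noncomputable def mimoRate (H : Matrix m n ℂ) (g s : ℝ) (A B : Matrix n n ℂ) : ℝ :=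
  Real.logb 2 (1 + g • (H * A * Hᴴ) * (s • (1 : Matrix m m ℂ) + g • (H * B * Hᴴ))⁻¹).det.re

variable {s g : ℝ} {P : Matrix m m ℂ} {A B B' : Matrix n n ℂ} {H : Matrix m n ℂ}

theorem noisyEntropy_mem_Icc (hP : P.PosSemidef) (hs : 0 < s) {t : ℝ} (ht : P.trace.re ≤ t) :
    noisyEntropy s P ∈
      Set.Icc (Fintype.card m * Real.logb 2 s) (Fintype.card m * Real.logb 2 (s + t)) := by
  have htrace := Complex.nonneg_iff.mp hP.trace_nonneg
  have htrace_eq : P.trace = (P.trace.re : ℂ) := Complex.ext rfl htrace.2.symm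
  have hlower : s ^ Fintype.card m ≤ (s • (1 : Matrix m m ℂ) + P).det.re := by
    have hdet := pow_card_le_det_smul_one_add hP hs.le
    exact_mod_cast (Complex.le_def.mp hdet).1
  have hupper : (s • (1 : Matrix m m ℂ) + P).det.re ≤ (s + t) ^ Fintype.card m := by
    have hdet : _ ≤ ((s : ℂ) + P.trace) ^ _ := det_smul_one_add_le_pow_card hP hs.le
    rw [htrace_eq, ← Complex.ofReal_add, ← Complex.ofReal_pow] at hdet
    calc (s • (1 : Matrix m m ℂ) + P).det.re
        ≤ (s + P.trace.re) ^ Fintype.card m := (Complex.le_def.mp hdet).1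
      _ ≤ (s + t) ^ Fintype.card m := by gcongr; linarith
  have hdet_pos : 0 < (s • (1 : Matrix m m ℂ) + P).det.re :=
    (pow_pos hs _).trans_le hlower
  rw [← Real.logb_pow, ← Real.logb_pow]
  exact ⟨Real.logb_le_logb_of_le one_lt_two (by positivity) hlower,
    Real.logb_le_logb_of_le one_lt_two hdet_pos hupper⟩

theorem logb_det_one_add_mul_inv {Q : Matrix m m ℂ} (hP : P.PosSemidef) (hQ : Q.PosSemidef)
    (hs : 0 < s) :
    Real.logb 2 (1 + P * (s • (1 : Matrix m m ℂ) + Q)⁻¹).det.re =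
      noisyEntropy s (P + Q) - noisyEntropy s Q := by
  have hdetQ := (posDef_smul_one_add hQ hs).det_pos
  obtain ⟨hdetQ_re, hdetQ_im⟩ := Complex.pos_iff.mp hdetQ
  obtain ⟨hdetPQ_re, -⟩ := Complex.pos_iff.mp (posDef_smul_one_add (hP.add hQ) hs).det_pos
  have hdetQ_eq : (s • (1 : Matrix m m ℂ) + Q).det = ((s • (1 : Matrix m m ℂ) + Q).det.re : ℂ) :=
    Complex.ext rfl hdetQ_im.symm
  rw [det_one_add_mul_inv P hdetQ.ne'.isUnit, add_left_comm, hdetQ_eq, Complex.div_ofReal_re,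
    Real.logb_div hdetPQ_re.ne' hdetQ_re.ne', noisyEntropy, noisyEntropy]

theorem mimoRate_congr_interference (hBB' : H * B * Hᴴ = H * B' * Hᴴ) :
    mimoRate H g s A B = mimoRate H g s A B' := by
  rw [mimoRate, hBB', mimoRate]

theorem mimoRate_zero_signal : mimoRate H g s 0 B = 0 := by
  simp [mimoRate]

theorem mimoRate_zero_interference (hs : s ≠ 0) :
    mimoRate H g s A 0 = Real.logb 2 (1 + (g / s) • (H * A * Hᴴ)).det.re := by
  have hinv : (s • (1 : Matrix m m ℂ))⁻¹ = s⁻¹ • 1 :=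
    inv_eq_right_inv (by rw [smul_mul_smul_comm, mul_inv_cancel₀ hs, one_smul, Matrix.one_mul])
  rw [mimoRate, Matrix.mul_zero, Matrix.zero_mul, smul_zero, add_zero, hinv, smul_mul_smul_comm,
    Matrix.mul_one, div_eq_mul_inv]

/-- A bound, uniform over all signal and interference covariances of total power at most `t`, for
the rate over the channel `H` with power gain `g` and noise power `s`. -/
noncomputable def mimoRateBound (H : Matrix m n ℂ) (g s t : ℝ) : ℝ :=
  Fintype.card m * (Real.logb 2 (s + g * (t * (H * Hᴴ).trace.re)) - Real.logb 2 s)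

theorem abs_mimoRate_le (hA : A.PosSemidef) (hB : B.PosSemidef) (hg : 0 ≤ g) (hs : 0 < s) {t : ℝ}
    (ht : (A + B).trace.re ≤ t) : |mimoRate H g s A B| ≤ mimoRateBound H g s t := by
  have hreceived : ∀ {Q : Matrix n n ℂ}, Q.PosSemidef → (g • (H * Q * Hᴴ)).PosSemidef :=
    fun hQ ↦ (hQ.mul_mul_conjTranspose_same H).smul hg
  have hpower : ∀ {Q : Matrix n n ℂ}, Q.PosSemidef → Q.trace.re ≤ t →
      (g • (H * Q * Hᴴ)).trace.re ≤ g * (t * (H * Hᴴ).trace.re) := by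
    intro Q hQ hQt
    have hgram := (Complex.nonneg_iff.mp (posSemidef_self_mul_conjTranspose H).trace_nonneg).1
    have hQ_im := (Complex.nonneg_iff.mp hQ.trace_nonneg).2
    have htrace := (Complex.le_def.mp (trace_mul_mul_conjTranspose_le hQ H)).1
    rw [Complex.mul_re, ← hQ_im, zero_mul, sub_zero] at htrace
    rw [trace_smul, Complex.smul_re, smul_eq_mul]
    gcongr
    exact htrace.trans (by gcongr)
  have hB_le : B.trace.re ≤ t := by
    have := (Complex.nonneg_iff.mp hA.trace_nonneg).1
    rw [trace_add, Complex.add_re] at ht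
    linarith
  have hsum : g • (H * A * Hᴴ) + g • (H * B * Hᴴ) = g • (H * (A + B) * Hᴴ) := by
    rw [← smul_add, ← Matrix.add_mul, ← Matrix.mul_add]
  have hAB := noisyEntropy_mem_Icc (hreceived (hA.add hB)) hs (hpower (hA.add hB) ht)
  have hB' := noisyEntropy_mem_Icc (hreceived hB) hs (hpower hB hB_le)
  rw [mimoRate, logb_det_one_add_mul_inv (hreceived hA) (hreceived hB) hs, hsum, mimoRateBound,
    mul_sub]
  exact abs_sub_le_of_le_of_le hAB.1 hAB.2 hB'.1 hB'.2

end Rate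

section WeightedSumRate

variable {ι : Type*} {I : Finset ι} (hI : I.Nonempty) (η ηc : ι → ℝ) {c c' p p' : ι → ℝ}

/-- The weighted sum rate `Σ_k η_k η_{c,k} min_j c_j + Σ_k η_k p_k` over the users `I`, with private
rates `p` and a common message decoded by every user, user `j` supporting the common rate `c_j`. -/
noncomputable def weightedSumRate (c p : ι → ℝ) : ℝ :=
  (∑ k ∈ I, η k * ηc k * I.inf' hI c) + ∑ k ∈ I, η k * p k

theorem weightedSumRate_congr (hc : ∀ k ∈ I, c k = c' k) (hp : ∀ k ∈ I, p k = p' k) :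
    weightedSumRate hI η ηc c p = weightedSumRate hI η ηc c' p' := by
  rw [weightedSumRate, weightedSumRate, Finset.inf'_congr hI rfl hc]
  exact congrArg _ (Finset.sum_congr rfl fun k hk ↦ by rw [hp k hk])

theorem weightedSumRate_le {b : ι → ℝ} (hc : ∀ k ∈ I, |c k| ≤ b k) (hp : ∀ k ∈ I, |p k| ≤ b k) :
    weightedSumRate hI η ηc c p ≤
      (∑ k ∈ I, |η k * ηc k| * I.sup' hI b) + ∑ k ∈ I, |η k| * b k := by
  have hmin : |I.inf' hI c| ≤ I.sup' hI b := by
    obtain ⟨j, hj, hinf⟩ := I.exists_mem_eq_inf' hI c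
    rw [hinf]
    exact (hc j hj).trans (I.le_sup' b hj)
  have hweight : ∀ {w x y : ℝ}, |x| ≤ y → w * x ≤ |w| * y := fun {w x y} hxy ↦
    calc w * x ≤ |w| * |x| := (le_abs_self _).trans_eq (abs_mul w x)
      _ ≤ |w| * y := by gcongr
  exact add_le_add (Finset.sum_le_sum fun k _ ↦ hweight hmin)
    (Finset.sum_le_sum fun k hk ↦ hweight (hp k hk))

end WeightedSumRate

section StackedChannel

variable {N : ℕ} {M : ℕ → ℕ} {H : (k : ℕ) → Matrix (Fin (M k)) (Fin N) ℂ} {i k : ℕ}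

theorem card_sigma_fin_eq_sum_Icc (M : ℕ → ℕ) (n : ℕ) :
    Fintype.card ((j : Fin n) × Fin (M (j.val + 1))) = ∑ j ∈ Finset.Icc 1 n, M j := by
  rw [Fintype.card_sigma]
  simp only [Fintype.card_fin]
  rw [Fin.sum_univ_eq_sum_range (fun j ↦ M (j + 1)) n, Finset.range_eq_Ico,
    Finset.sum_Ico_add' M 0 n 1]
  rfl

theorem rank_stackMat_of_le (hik : i ≤ k)
    (hrank : (stackMat N M H k).rank = Fintype.card ((j : Fin (k - 1)) × Fin (M (j.val + 1)))) :
    (stackMat N M H i).rank = Fintype.card ((j : Fin (i - 1)) × Fin (M (j.val + 1))) := by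
  have hrows : LinearIndependent ℂ (stackMat N M H k).row := by
    rw [linearIndependent_iff_card_eq_finrank_span, ← hrank, rank_eq_finrank_span_row]
    rfl
  let rowIncl : (j : Fin (i - 1)) × Fin (M (j.val + 1)) → (j : Fin (k - 1)) × Fin (M (j.val + 1)) :=
    Sigma.map (Fin.castLE (Nat.sub_le_sub_right hik 1)) fun _ ↦ id
  have hrowIncl : Function.Injective rowIncl :=
    (Fin.castLE_injective _).sigma_map fun _ ↦ Function.injective_id
  exact (hrows.comp rowIncl hrowIncl).rank_matrix

theorem stackMat_mul_eq_zero {l : Type*} {B : Matrix (Fin N) l ℂ}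
    (hB : ∀ j, 1 ≤ j → j < k → H j * B = 0) : stackMat N M H k * B = 0 := by
  ext ⟨j, r⟩ c
  exact congrFun (congrFun (hB (j.val + 1) (by omega) (by omega)) r) c

theorem mul_conjTranspose_mul_eq_self_of_forall_mul_eq_zero {l : Type*}
    {Ψ : Matrix (Fin N) (Fin (snsDim N M k)) ℂ} {B : Matrix (Fin N) l ℂ}
    (hrank : (stackMat N M H k).rank = Fintype.card ((j : Fin (k - 1)) × Fin (M (j.val + 1))))
    (hΨorth : Ψᴴ * Ψ = 1) (hΨnull : ∀ j, 1 ≤ j → j < k → H j * Ψ = 0)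
    (hBnull : ∀ j, 1 ≤ j → j < k → H j * B = 0) : Ψ * (Ψᴴ * B) = B := by
  refine mul_mul_eq_self_of_mul_eq_zero hΨorth (stackMat_mul_eq_zero hΨnull) ?_
    (stackMat_mul_eq_zero hBnull)
  rw [hrank, card_sigma_fin_eq_sum_Icc, Fintype.card_fin, Fintype.card_fin, snsDim]
  omega

end StackedChannel

section RateRegions

variable {K N : ℕ} {M : ℕ → ℕ} {H : (k : ℕ) → Matrix (Fin (M k)) (Fin N) ℂ}
  {Ψ : (k : ℕ) → Matrix (Fin N) (Fin (snsDim N M k)) ℂ}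
  {Ψbd : (k : ℕ) → Matrix (Fin N) (Fin (M k)) ℂ} {L : ℕ → ℝ} {s : ℝ} {PT : ℝ}
  {Qc : Matrix (Fin N) (Fin N) ℂ}
  {X : (k : ℕ) → Matrix (Fin (snsDim N M k)) (Fin (snsDim N M k)) ℂ}
  {S : (k : ℕ) → Matrix (Fin (M k)) (Fin (M k)) ℂ} {k : ℕ}

theorem sns_orthonormal_of_one_eq_one (hΨ1 : Ψ 1 = (1 : Matrix (Fin N) (Fin N) ℂ))
    (hΨorth : ∀ k ∈ Finset.Icc 2 K, (Ψ k)ᴴ * Ψ k = 1) :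
    ∀ k ∈ Finset.Icc 1 K, (Ψ k)ᴴ * Ψ k = 1 := by
  intro k hk
  obtain ⟨hk1, hkK⟩ := Finset.mem_Icc.mp hk
  obtain rfl | hk2 := hk1.eq_or_lt
  · rw [hΨ1]
    exact (congrArg (· * 1) conjTranspose_one).trans (Matrix.one_mul 1)
  · exact hΨorth k (Finset.mem_Icc.mpr ⟨hk2, hkK⟩)

theorem trace_sum_sns_covariance (hΨorth : ∀ k ∈ Finset.Icc 1 K, (Ψ k)ᴴ * Ψ k = 1)
    {T : Finset ℕ} (hT : T ⊆ Finset.Icc 1 K) :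
    (∑ j ∈ T, Ψ j * X j * (Ψ j)ᴴ).trace.re = ∑ j ∈ T, (X j).trace.re := by
  rw [trace_sum, Complex.re_sum]
  exact Finset.sum_congr rfl fun j hj ↦ by
    rw [trace_mul_mul_conjTranspose_of_orthonormal (hΨorth j (hT hj))]

theorem trace_sum_sns_covariance_le (hΨorth : ∀ k ∈ Finset.Icc 1 K, (Ψ k)ᴴ * Ψ k = 1)
    (hX : ∀ k ∈ Finset.Icc 1 K, (X k).PosSemidef) {T : Finset ℕ} (hT : T ⊆ Finset.Icc 1 K) :
    (∑ j ∈ T, Ψ j * X j * (Ψ j)ᴴ).trace.re ≤ ∑ j ∈ Finset.Icc 1 K, (X j).trace.re := by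
  rw [trace_sum_sns_covariance hΨorth hT]
  exact Finset.sum_le_sum_of_subset_of_nonneg hT fun j hj _ ↦
    (Complex.nonneg_iff.mp (hX j hj).trace_nonneg).1

theorem posSemidef_sum_sns_covariance (hX : ∀ k ∈ Finset.Icc 1 K, (X k).PosSemidef)
    {T : Finset ℕ} (hT : T ⊆ Finset.Icc 1 K) : (∑ j ∈ T, Ψ j * X j * (Ψ j)ᴴ).PosSemidef :=
  posSemidef_sum T fun j hj ↦ (hX j (hT hj)).mul_mul_conjTranspose_same (Ψ j)

theorem abs_snsCommonRate_le (hk : k ∈ Finset.Icc 1 K) (hL : 0 < L k) (hs : 0 < s)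
    (hΨorth : ∀ k ∈ Finset.Icc 1 K, (Ψ k)ᴴ * Ψ k = 1) (hQc : Qc.PosSemidef)
    (hX : ∀ k ∈ Finset.Icc 1 K, (X k).PosSemidef)
    (hpower : Qc.trace.re + ∑ k ∈ Finset.Icc 1 K, (X k).trace.re ≤ PT) :
    |snsCommonRate N M H Ψ L s Qc X k| ≤ mimoRateBound (H k) (1 / L k) s PT := by
  have hsub : Finset.Icc 1 k ⊆ Finset.Icc 1 K :=
    Finset.Icc_subset_Icc_right (Finset.mem_Icc.mp hk).2
  refine abs_mimoRate_le hQc (posSemidef_sum_sns_covariance hX hsub) (by positivity) hs ?_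
  rw [trace_add, Complex.add_re]
  linarith [trace_sum_sns_covariance_le hΨorth hX hsub]

theorem abs_snsPrivateRate_le (hk : k ∈ Finset.Icc 1 K) (hL : 0 < L k) (hs : 0 < s)
    (hΨorth : ∀ k ∈ Finset.Icc 1 K, (Ψ k)ᴴ * Ψ k = 1)
    (hX : ∀ k ∈ Finset.Icc 1 K, (X k).PosSemidef)
    (hpower : ∑ k ∈ Finset.Icc 1 K, (X k).trace.re ≤ PT) :
    |snsPrivateRate N M H Ψ L s X k| ≤ mimoRateBound (H k) (1 / L k) s PT := by
  obtain ⟨hk1, hkK⟩ := Finset.mem_Icc.mp hk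
  have hsub : Finset.Icc 1 (k - 1) ⊆ Finset.Icc 1 K := Finset.Icc_subset_Icc_right (by omega)
  have hinsert : Ψ k * X k * (Ψ k)ᴴ + ∑ j ∈ Finset.Icc 1 (k - 1), Ψ j * X j * (Ψ j)ᴴ =
      ∑ j ∈ Finset.Icc 1 k, Ψ j * X j * (Ψ j)ᴴ := by
    obtain ⟨i, rfl⟩ := Nat.exists_eq_add_of_le' hk1
    rw [Finset.sum_Icc_succ_top hk1, Nat.add_sub_cancel, add_comm]
  refine abs_mimoRate_le ((hX k hk).mul_mul_conjTranspose_same (Ψ k))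
    (posSemidef_sum_sns_covariance hX hsub) (by positivity) hs ?_
  rw [hinsert]
  exact (trace_sum_sns_covariance_le hΨorth hX (Finset.Icc_subset_Icc_right hkK)).trans hpower

/-- The SNS covariances `X_k = Ψ_kᴴ Q_k Ψ_k` imitating the BD covariances
`Q_k = Ψ_k^{BD} S_k (Ψ_k^{BD})ᴴ`. -/
def snsLift (Ψ : (k : ℕ) → Matrix (Fin N) (Fin (snsDim N M k)) ℂ)
    (Ψbd : (k : ℕ) → Matrix (Fin N) (Fin (M k)) ℂ)
    (S : (k : ℕ) → Matrix (Fin (M k)) (Fin (M k)) ℂ) (k : ℕ) :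
    Matrix (Fin (snsDim N M k)) (Fin (snsDim N M k)) ℂ :=
  (Ψ k)ᴴ * Ψbd k * S k * ((Ψ k)ᴴ * Ψbd k)ᴴ

theorem posSemidef_snsLift (hS : (S k).PosSemidef) : (snsLift Ψ Ψbd S k).PosSemidef :=
  hS.mul_mul_conjTranspose_same _

theorem rank_snsLift_le : (snsLift Ψ Ψbd S k).rank ≤ M k :=
  calc (snsLift Ψ Ψbd S k).rank ≤ ((Ψ k)ᴴ * Ψbd k * S k).rank := rank_mul_le_left _ _
    _ ≤ (S k).rank := rank_mul_le_right _ _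
    _ ≤ M k := rank_le_width (S k)

theorem snsLift_covariance (hspan : Ψ k * ((Ψ k)ᴴ * Ψbd k) = Ψbd k) :
    Ψ k * snsLift Ψ Ψbd S k * (Ψ k)ᴴ = Ψbd k * S k * (Ψbd k)ᴴ := by
  calc Ψ k * snsLift Ψ Ψbd S k * (Ψ k)ᴴ
      = Ψ k * ((Ψ k)ᴴ * Ψbd k) * S k * (Ψ k * ((Ψ k)ᴴ * Ψbd k))ᴴ := by
        simp only [snsLift, conjTranspose_mul, Matrix.mul_assoc]
    _ = Ψbd k * S k * (Ψbd k)ᴴ := by rw [hspan]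

theorem trace_snsLift (hspan : Ψ k * ((Ψ k)ᴴ * Ψbd k) = Ψbd k) (hΨorth : (Ψ k)ᴴ * Ψ k = 1)
    (hbdorth : (Ψbd k)ᴴ * Ψbd k = 1) : (snsLift Ψ Ψbd S k).trace = (S k).trace := by
  rw [← trace_mul_mul_conjTranspose_of_orthonormal hΨorth, snsLift_covariance hspan,
    trace_mul_mul_conjTranspose_of_orthonormal hbdorth]

theorem snsLift_interference_eq_zero
    (hspan : ∀ k ∈ Finset.Icc 1 K, Ψ k * ((Ψ k)ᴴ * Ψbd k) = Ψbd k)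
    (hbdnull : ∀ k ∈ Finset.Icc 1 K, ∀ j ∈ Finset.Icc 1 K, j ≠ k → H j * Ψbd k = 0)
    (hk : k ∈ Finset.Icc 1 K) :
    H k * (∑ j ∈ Finset.Icc 1 (k - 1), Ψ j * snsLift Ψ Ψbd S j * (Ψ j)ᴴ) * (H k)ᴴ = 0 := by
  rw [Matrix.mul_sum, Matrix.sum_mul]
  refine Finset.sum_eq_zero fun j hj ↦ ?_
  simp only [Finset.mem_Icc] at hk hj
  have hjK : j ∈ Finset.Icc 1 K := Finset.mem_Icc.mpr ⟨hj.1, by omega⟩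
  rw [snsLift_covariance (hspan j hjK)]
  exact mul_mul_mul_conjTranspose_eq_zero
    (hbdnull j hjK k (Finset.mem_Icc.mpr hk) (by omega)) (S j)

theorem snsPrivateRate_snsLift (hs : s ≠ 0)
    (hspan : ∀ k ∈ Finset.Icc 1 K, Ψ k * ((Ψ k)ᴴ * Ψbd k) = Ψbd k)
    (hbdnull : ∀ k ∈ Finset.Icc 1 K, ∀ j ∈ Finset.Icc 1 K, j ≠ k → H j * Ψbd k = 0)
    (hk : k ∈ Finset.Icc 1 K) :
    snsPrivateRate N M H Ψ L s (snsLift Ψ Ψbd S) k = bdPrivateRate N M H Ψbd L s S k :=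
  calc snsPrivateRate N M H Ψ L s (snsLift Ψ Ψbd S) k
      = mimoRate (H k) (1 / L k) s (Ψ k * snsLift Ψ Ψbd S k * (Ψ k)ᴴ) 0 := by
        refine mimoRate_congr_interference ?_
        rw [snsLift_interference_eq_zero hspan hbdnull hk, Matrix.mul_zero, Matrix.zero_mul]
    _ = bdPrivateRate N M H Ψbd L s S k := by
        rw [mimoRate_zero_interference hs, snsLift_covariance (hspan k hk), div_div, bdPrivateRate]

theorem snsCommonRate_snsLift
    (hspan : ∀ k ∈ Finset.Icc 1 K, Ψ k * ((Ψ k)ᴴ * Ψbd k) = Ψbd k)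
    (hbdnull : ∀ k ∈ Finset.Icc 1 K, ∀ j ∈ Finset.Icc 1 K, j ≠ k → H j * Ψbd k = 0)
    (hk : k ∈ Finset.Icc 1 K) :
    snsCommonRate N M H Ψ L s Qc (snsLift Ψ Ψbd S) k = bdCommonRate N M H Ψbd L s Qc S k := by
  refine mimoRate_congr_interference ?_
  have hinterference := snsLift_interference_eq_zero (S := S) hspan hbdnull hk
  have hcovariance := snsLift_covariance (S := S) (hspan k hk)
  obtain ⟨i, rfl⟩ := Nat.exists_eq_add_of_le' (Finset.mem_Icc.mp hk).1
  rw [Nat.add_sub_cancel] at hinterference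
  rw [Finset.sum_Icc_succ_top (by omega), Matrix.mul_add, Matrix.add_mul, hinterference, zero_add,
    hcovariance]

variable {hK : 1 ≤ K} {η ηc : ℕ → ℝ}

/-- The weighted sum rates achievable by SNS precoding; `snsOptWSR` is their supremum. -/
def snsRates (K N : ℕ) (hK : 1 ≤ K) (M : ℕ → ℕ) (H : (k : ℕ) → Matrix (Fin (M k)) (Fin N) ℂ)
    (Ψ : (k : ℕ) → Matrix (Fin N) (Fin (snsDim N M k)) ℂ)
    (L : ℕ → ℝ) (s : ℝ) (η ηc : ℕ → ℝ) (PT : ℝ) : Set ℝ :=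
  {r | ∃ (Qc : Matrix (Fin N) (Fin N) ℂ)
      (X : (k : ℕ) → Matrix (Fin (snsDim N M k)) (Fin (snsDim N M k)) ℂ),
    Qc.PosSemidef ∧
    Qc.rank ≤ (Finset.Icc 1 K).inf' (Finset.nonempty_Icc.mpr hK) M ∧
    (∀ k ∈ Finset.Icc 1 K, (X k).PosSemidef ∧ (X k).rank ≤ M k) ∧
    Qc.trace.re + ∑ k ∈ Finset.Icc 1 K, (X k).trace.re ≤ PT ∧
    r = weightedSumRate (Finset.nonempty_Icc.mpr hK) η ηc
      (snsCommonRate N M H Ψ L s Qc X) (snsPrivateRate N M H Ψ L s X)}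

/-- The weighted sum rates achievable by BD-based MIMO-RSMA; `bdRsmaOptWSR` is their supremum. -/
def bdRsmaRates (K N : ℕ) (hK : 1 ≤ K) (M : ℕ → ℕ) (H : (k : ℕ) → Matrix (Fin (M k)) (Fin N) ℂ)
    (Ψbd : (k : ℕ) → Matrix (Fin N) (Fin (M k)) ℂ)
    (L : ℕ → ℝ) (s : ℝ) (η ηc : ℕ → ℝ) (PT : ℝ) : Set ℝ :=
  {r | ∃ (Qc : Matrix (Fin N) (Fin N) ℂ) (S : (k : ℕ) → Matrix (Fin (M k)) (Fin (M k)) ℂ),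
    Qc.PosSemidef ∧
    Qc.rank ≤ (Finset.Icc 1 K).inf' (Finset.nonempty_Icc.mpr hK) M ∧
    (∀ k ∈ Finset.Icc 1 K, (S k).PosSemidef) ∧
    Qc.trace.re + ∑ k ∈ Finset.Icc 1 K, (S k).trace.re ≤ PT ∧
    r = weightedSumRate (Finset.nonempty_Icc.mpr hK) η ηc
      (bdCommonRate N M H Ψbd L s Qc S) (bdPrivateRate N M H Ψbd L s S)}

/-- The weighted sum rates achievable by plain BD precoding; `bdOptWSR` is their supremum. -/
def bdRates (K N : ℕ) (M : ℕ → ℕ) (H : (k : ℕ) → Matrix (Fin (M k)) (Fin N) ℂ)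
    (Ψbd : (k : ℕ) → Matrix (Fin N) (Fin (M k)) ℂ)
    (L : ℕ → ℝ) (s : ℝ) (η : ℕ → ℝ) (PT : ℝ) : Set ℝ :=
  {r | ∃ S : (k : ℕ) → Matrix (Fin (M k)) (Fin (M k)) ℂ,
    (∀ k ∈ Finset.Icc 1 K, (S k).PosSemidef) ∧
    (∑ k ∈ Finset.Icc 1 K, (S k).trace.re) ≤ PT ∧
    r = ∑ k ∈ Finset.Icc 1 K, η k * bdPrivateRate N M H Ψbd L s S k}

theorem bdRates_nonempty (hPT : 0 ≤ PT) : (bdRates K N M H Ψbd L s η PT).Nonempty :=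
  ⟨_, fun _ ↦ 0, fun _ _ ↦ PosSemidef.zero, by simpa using hPT, rfl⟩

theorem bdRates_subset_bdRsmaRates :
    bdRates K N M H Ψbd L s η PT ⊆ bdRsmaRates K N hK M H Ψbd L s η ηc PT := by
  rintro r ⟨S, hS, hpower, rfl⟩
  refine ⟨0, S, PosSemidef.zero, by simp, hS, by simpa using hpower, ?_⟩
  have hcommon : bdCommonRate N M H Ψbd L s 0 S = fun _ ↦ 0 := funext fun _ ↦ mimoRate_zero_signal
  simp [weightedSumRate, hcommon]

theorem bdRsmaRates_subset_snsRates (hs : s ≠ 0)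
    (hspan : ∀ k ∈ Finset.Icc 1 K, Ψ k * ((Ψ k)ᴴ * Ψbd k) = Ψbd k)
    (hΨorth : ∀ k ∈ Finset.Icc 1 K, (Ψ k)ᴴ * Ψ k = 1)
    (hbdorth : ∀ k ∈ Finset.Icc 1 K, (Ψbd k)ᴴ * Ψbd k = 1)
    (hbdnull : ∀ k ∈ Finset.Icc 1 K, ∀ j ∈ Finset.Icc 1 K, j ≠ k → H j * Ψbd k = 0) :
    bdRsmaRates K N hK M H Ψbd L s η ηc PT ⊆ snsRates K N hK M H Ψ L s η ηc PT := by
  rintro r ⟨Qc, S, hQc, hQc_rank, hS, hpower, rfl⟩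
  refine ⟨Qc, snsLift Ψ Ψbd S, hQc, hQc_rank,
    fun k hk ↦ ⟨posSemidef_snsLift (hS k hk), rank_snsLift_le⟩, ?_, ?_⟩
  · rwa [Finset.sum_congr rfl fun k hk ↦ by
      rw [trace_snsLift (hspan k hk) (hΨorth k hk) (hbdorth k hk)]]
  · exact weightedSumRate_congr _ η ηc
      (fun k hk ↦ (snsCommonRate_snsLift hspan hbdnull hk).symm)
      fun k hk ↦ (snsPrivateRate_snsLift hs hspan hbdnull hk).symm

theorem bddAbove_snsRates (hL : ∀ k ∈ Finset.Icc 1 K, 0 < L k) (hs : 0 < s)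
    (hΨorth : ∀ k ∈ Finset.Icc 1 K, (Ψ k)ᴴ * Ψ k = 1) :
    BddAbove (snsRates K N hK M H Ψ L s η ηc PT) := by
  let b : ℕ → ℝ := fun k ↦ mimoRateBound (H k) (1 / L k) s PT
  refine ⟨(∑ k ∈ Finset.Icc 1 K, |η k * ηc k| *
    (Finset.Icc 1 K).sup' (Finset.nonempty_Icc.mpr hK) b) + ∑ k ∈ Finset.Icc 1 K, |η k| * b k, ?_⟩
  rintro r ⟨Qc, X, hQc, -, hX, hpower, rfl⟩
  have hX_psd : ∀ k ∈ Finset.Icc 1 K, (X k).PosSemidef := fun k hk ↦ (hX k hk).1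
  have hX_power : ∑ k ∈ Finset.Icc 1 K, (X k).trace.re ≤ PT := by
    linarith [(Complex.nonneg_iff.mp hQc.trace_nonneg).1]
  exact weightedSumRate_le _ η ηc
    (fun k hk ↦ abs_snsCommonRate_le hk (hL k hk) hs hΨorth hQc hX_psd hpower)
    fun k hk ↦ abs_snsPrivateRate_le hk (hL k hk) hs hΨorth hX_psd hX_power

end RateRegions

theorem sns_wsr_ge_bdrsma_ge_bd_general (K N : ℕ) (hK : 1 ≤ K) (M : ℕ → ℕ)
    (H : (k : ℕ) → Matrix (Fin (M k)) (Fin N) ℂ)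
    (hrank : (stackMat N M H K).rank = Fintype.card ((j : Fin (K - 1)) × Fin (M (j.val + 1))))
    (L : ℕ → ℝ) (hL : ∀ k ∈ Finset.Icc 1 K, 0 < L k)
    (s : ℝ) (hs : 0 < s) (PT : ℝ) (hPT : 0 ≤ PT) (η ηc : ℕ → ℝ)
    (Ψ : (k : ℕ) → Matrix (Fin N) (Fin (snsDim N M k)) ℂ)
    (hΨorth : ∀ k ∈ Finset.Icc 1 K, (Ψ k)ᴴ * Ψ k = 1)
    (hΨnull : ∀ k ∈ Finset.Icc 2 K, ∀ j, 1 ≤ j → j < k → H j * Ψ k = 0)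
    (Ψbd : (k : ℕ) → Matrix (Fin N) (Fin (M k)) ℂ)
    (hbdorth : ∀ k ∈ Finset.Icc 1 K, (Ψbd k)ᴴ * Ψbd k = 1)
    (hbdnull : ∀ k ∈ Finset.Icc 1 K, ∀ j ∈ Finset.Icc 1 K, j ≠ k → H j * Ψbd k = 0) :
    bdRsmaOptWSR K N hK M H Ψbd L s η ηc PT ≤ snsOptWSR K N hK M H Ψ L s η ηc PT ∧
    bdOptWSR K N M H Ψbd L s η PT ≤ bdRsmaOptWSR K N hK M H Ψbd L s η ηc PT := by
  have hspan : ∀ k ∈ Finset.Icc 1 K, Ψ k * ((Ψ k)ᴴ * Ψbd k) = Ψbd k := fun k hk ↦ by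
    have hkK := (Finset.mem_Icc.mp hk).2
    exact mul_conjTranspose_mul_eq_self_of_forall_mul_eq_zero (rank_stackMat_of_le hkK hrank)
      (hΨorth k hk) (fun j hj hjk ↦ hΨnull k (Finset.mem_Icc.mpr ⟨by omega, hkK⟩) j hj hjk)
      fun j hj hjk ↦ hbdnull k hk j (Finset.mem_Icc.mpr ⟨hj, hjk.le.trans hkK⟩) hjk.ne
  have hbdd : BddAbove (snsRates K N hK M H Ψ L s η ηc PT) := bddAbove_snsRates hL hs hΨorth
  have hrsma : bdRsmaRates K N hK M H Ψbd L s η ηc PT ⊆ snsRates K N hK M H Ψ L s η ηc PT :=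
    bdRsmaRates_subset_snsRates hs.ne' hspan hΨorth hbdorth hbdnull
  have hbd : bdRates K N M H Ψbd L s η PT ⊆ bdRsmaRates K N hK M H Ψbd L s η ηc PT :=
    bdRates_subset_bdRsmaRates
  exact ⟨csSup_le_csSup hbdd ((bdRates_nonempty hPT).mono hbd) hrsma,
    csSup_le_csSup (hbdd.mono hrsma) (bdRates_nonempty hPT) hbd⟩

/-- Proposition 1, first chain: `R⋆ ≥ R^{BD+MIMO-CM⋆} ≥ R^{BD⋆}`: the optimal weighted
sum rate of SNS precoding dominates that of BD-based MIMO-RSMA, which dominates that of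
plain BD precoding. -/
theorem sns_wsr_ge_bdrsma_ge_bd (K N : ℕ) (hK : 1 ≤ K) (hN : 0 < N)
    (M : ℕ → ℕ) (hM : ∀ k ∈ Finset.Icc 1 K, 0 < M k)
    (hsum : ∑ k ∈ Finset.Icc 1 K, M k ≤ N)
    (H : (k : ℕ) → Matrix (Fin (M k)) (Fin N) ℂ)
    (hrank : (stackMat N M H (K + 1)).rank
      = Fintype.card ((j : Fin K) × Fin (M (j.val + 1))))
    (L : ℕ → ℝ) (hL : ∀ k ∈ Finset.Icc 1 K, 0 < L k)
    (s : ℝ) (hs : 0 < s) (PT : ℝ) (hPT : 0 < PT)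
    (η ηc : ℕ → ℝ)
    (hη : ∀ k ∈ Finset.Icc 1 K, 0 ≤ η k) (hηc : ∀ k ∈ Finset.Icc 1 K, 0 ≤ ηc k)
    (Ψ : (k : ℕ) → Matrix (Fin N) (Fin (snsDim N M k)) ℂ)
    (hΨ1 : Ψ 1 = (1 : Matrix (Fin N) (Fin N) ℂ))
    (hΨorth : ∀ k ∈ Finset.Icc 2 K, (Ψ k)ᴴ * Ψ k = 1)
    (hΨnull : ∀ k ∈ Finset.Icc 2 K, ∀ j, 1 ≤ j → j < k → H j * Ψ k = 0)
    (Ψbd : (k : ℕ) → Matrix (Fin N) (Fin (M k)) ℂ)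
    (hbdorth : ∀ k ∈ Finset.Icc 1 K, (Ψbd k)ᴴ * Ψbd k = 1)
    (hbdnull : ∀ k ∈ Finset.Icc 1 K, ∀ j ∈ Finset.Icc 1 K, j ≠ k → H j * Ψbd k = 0) :
    bdRsmaOptWSR K N hK M H Ψbd L s η ηc PT ≤ snsOptWSR K N hK M H Ψ L s η ηc PT ∧
    bdOptWSR K N M H Ψbd L s η PT ≤ bdRsmaOptWSR K N hK M H Ψbd L s η ηc PT := by
  exact sns_wsr_ge_bdrsma_ge_bd_general K N hK M H (rank_stackMat_of_le K.le_succ hrank) L hL s hs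
    PT hPT.le η ηc Ψ (sns_orthonormal_of_one_eq_one hΨ1 hΨorth) hΨnull Ψbd hbdorth hbdnull
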